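/- Rényi-l entropy density from the twisted transfer operator: fix d, D ≥ 1 and a tensor A : Fin d → Matrix (Fin D) (Fin D) ℂ whose transfer matrix T is gapped and normalized (1 is a root of multiplicity one of the characteristic polynomial of T and every other root has modulus < 1). Fix integers l ≥ 2 and k ≥ 2, and for p ≥ 1 set n = k·p and define the Rényi-l entropy of the normalized reduced state of every k-th site as S_l^{(p)} = (1/(1−l)) · ( Real.log((trace((σ_k^{(n)})^l)).re) − l · Real.log((trace σ_k^{(n)}).re) ). Then liminf_{p→∞} (1/p) · S_l^{(p)} = −(1/(l−1)) · Real.log(r), where r is the maximum of the moduli of the roots of the characteristic polynomial of the order-l twisted transfer operator ₗT̂_k (the spectral radius of ₗT̂_k). -/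

import Mathlib

open Matrix Filter
open scoped Kronecker

/-- The unnormalized MPS wavefunction with periodic boundary conditions. -/
noncomputable def mpsPsi {d D : ℕ} (n : ℕ) (A : Fin d → Matrix (Fin D) (Fin D) ℂ)
    (i : Fin n → Fin d) : ℂ :=
  ((List.ofFn fun j : Fin n => A (i j)).prod).trace

/-- The full configuration on `k * p` sites determined by the configuration `I` on the kept
sites (index `≡ k - 1 (mod k)`) and `c` on the traced-out sites. -/
def combCfg (d k p : ℕ) (I : Fin p → Fin d)
    (c : {m : Fin (k * p) // (m : ℕ) % k ≠ k - 1} → Fin d) : Fin (k * p) → Fin d :=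
  fun m =>
    if h : (m : ℕ) % k = k - 1 then I ⟨(m : ℕ) / k, Nat.div_lt_of_lt_mul m.2⟩
    else c ⟨m, h⟩

/-- The unnormalized reduced density matrix of every `k`-th site of the length-`k * p` MPS. -/
noncomputable def combReducedState (d D k p : ℕ) (A : Fin d → Matrix (Fin D) (Fin D) ℂ) :
    Matrix (Fin p → Fin d) (Fin p → Fin d) ℂ :=
  fun J I => ∑ c : {m : Fin (k * p) // (m : ℕ) % k ≠ k - 1} → Fin d,
    mpsPsi (k * p) A (combCfg d k p I c) * star (mpsPsi (k * p) A (combCfg d k p J c))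

/-- The transfer matrix `T = ∑ i, A i ⊗ₖ (A i).map star` of the MPS tensor `A`. -/
noncomputable def mpsTransfer {d D : ℕ} (A : Fin d → Matrix (Fin D) (Fin D) ℂ) :
    Matrix (Fin D × Fin D) (Fin D × Fin D) ℂ :=
  ∑ i, A i ⊗ₖ (A i).map star

/-- The cyclic successor `i ↦ i + 1` on `Fin l`. -/
def cycSucc {l : ℕ} (i : Fin l) : Fin l :=
  ⟨((i : ℕ) + 1) % l, Nat.mod_lt _ (Nat.lt_of_le_of_lt (Nat.zero_le _) i.isLt)⟩

/-- The `l`-fold Kronecker power of a matrix on `Fin D × Fin D`, realized on the index type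
`Fin l → Fin D × Fin D`. -/
def kronPow {D : ℕ} (l : ℕ) (T : Matrix (Fin D × Fin D) (Fin D × Fin D) ℂ) :
    Matrix (Fin l → Fin D × Fin D) (Fin l → Fin D × Fin D) ℂ :=
  fun f g => ∏ i, T (f i) (g i)

/-- The permutation matrix `U_l` twisting the conjugated bond factors cyclically. -/
def ulMatrix (l D : ℕ) : Matrix (Fin l → Fin D × Fin D) (Fin l → Fin D × Fin D) ℂ :=
  fun f g => if ∀ i, (f i).1 = (g i).1 ∧ (f i).2 = (g (cycSucc i)).2 then 1 else 0

/-- The order-`l` twisted transfer operator `ₗT̂_k = (T^{⊗l})^(k-1) * U_l⁻¹ * T^{⊗l} * U_l`. -/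
noncomputable def twistedTransferL {d D : ℕ} (l k : ℕ)
    (A : Fin d → Matrix (Fin D) (Fin D) ℂ) :
    Matrix (Fin l → Fin D × Fin D) (Fin l → Fin D × Fin D) ℂ :=
  (kronPow l (mpsTransfer A)) ^ (k - 1) * (ulMatrix l D)⁻¹ * kronPow l (mpsTransfer A) *
    ulMatrix l D


theorem det_aeval_eq_prod {n : Type*} [Fintype n] [DecidableEq n] (M : Matrix n n ℂ)
    (q : Polynomial ℂ) :
    (Polynomial.aeval M q).det = (M.charpoly.roots.map (fun z => q.eval z)).prod := by
  have hcard : M.charpoly.roots.card = Fintype.card n := by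
    rw [← M.charpoly_natDegree_eq_dim]
    exact (IsAlgClosed.splits M.charpoly).natDegree_eq_card_roots.symm
  have hprod : M.charpoly = (M.charpoly.roots.map (fun a => Polynomial.X - Polynomial.C a)).prod :=
    (IsAlgClosed.splits M.charpoly).eq_prod_roots_of_monic M.charpoly_monic
  let φ : Polynomial ℂ →* ℂ := (Matrix.detMonoidHom).comp
    ((Polynomial.aeval M : Polynomial ℂ →ₐ[ℂ] Matrix n n ℂ) : Polynomial ℂ →* Matrix n n ℂ)
  let ψ : Polynomial ℂ →* ℂ :=
    { toFun := fun q => (M.charpoly.roots.map (fun z => q.eval z)).prod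
      map_one' := by simp
      map_mul' := by intro a b; simp [Multiset.prod_map_mul] }
  change φ q = ψ q
  have hC : ∀ c, φ (Polynomial.C c) = ψ (Polynomial.C c) := by
    intro c
    simp only [φ, ψ, MonoidHom.coe_comp, Function.comp_apply, MonoidHom.coe_coe,
      MonoidHom.coe_mk, OneHom.coe_mk, Polynomial.aeval_C, Polynomial.eval_C,
      Multiset.map_const', Multiset.prod_replicate, hcard, coe_detMonoidHom]
    rw [Algebra.algebraMap_eq_smul_one, Matrix.det_smul]; simp
  have hX : ∀ w, φ (Polynomial.X - Polynomial.C w) = ψ (Polynomial.X - Polynomial.C w) := by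
    intro w
    have e1 : M.charpoly.eval w = (M.charpoly.roots.map (fun z => w - z)).prod := by
      conv_lhs => rw [hprod]
      rw [Polynomial.eval_multiset_prod, Multiset.map_map]
      simp
    rw [Matrix.eval_charpoly] at e1
    have e2 : (M.charpoly.roots.map (fun z => z - w)).prod
        = (-1) ^ Fintype.card n * (M.charpoly.roots.map (fun z => w - z)).prod := by
      rw [← hcard]
      have : ∀ S : Multiset ℂ, (S.map (fun z => z - w)).prod
        = (-1) ^ S.card * (S.map (fun z => w - z)).prod := by
        intro S
        induction S using Multiset.induction with
        | empty => simp
        | cons a s ih => simp [ih, pow_succ]; ring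
      exact this _
    simp only [φ, ψ, MonoidHom.coe_comp, Function.comp_apply, MonoidHom.coe_coe,
      MonoidHom.coe_mk, OneHom.coe_mk, map_sub, Polynomial.aeval_C, Polynomial.aeval_X,
      Polynomial.eval_sub, Polynomial.eval_X, Polynomial.eval_C, coe_detMonoidHom]
    rw [e2, ← e1, ← Matrix.det_neg]
    simp [Matrix.algebraMap_eq_diagonal, Pi.algebraMap_def, Matrix.scalar_apply]
  rw [(IsAlgClosed.splits q).eq_prod_roots, map_mul, map_mul, hC, map_multiset_prod,
    map_multiset_prod, Multiset.map_map, Multiset.map_map]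
  congr 3
  funext w
  exact hX w

theorem trace_pow_eq_sum {n : Type*} [Fintype n] [DecidableEq n] (M : Matrix n n ℂ) (p : ℕ) :
    (M ^ p).trace = (M.charpoly.roots.map (fun z => z ^ p)).sum := by
  have : (M ^ p).charpoly =
      ((M.charpoly.roots.map (fun z => z ^ p)).map
        (fun a => Polynomial.X - Polynomial.C a)).prod := by
    apply Polynomial.funext
    intro y
    rw [Matrix.eval_charpoly]
    have := det_aeval_eq_prod M (Polynomial.C y - Polynomial.X ^ p)
    rw [Polynomial.eval_multiset_prod, Multiset.map_map, Multiset.map_map]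
    simp only [Function.comp_def, Polynomial.eval_sub, Polynomial.eval_X, Polynomial.eval_C]
    simp only [map_sub, map_pow, Polynomial.aeval_C, Polynomial.aeval_X, Polynomial.eval_sub,
      Polynomial.eval_pow, Polynomial.eval_X, Polynomial.eval_C] at this
    rw [← this]
    simp [Matrix.algebraMap_eq_diagonal, Pi.algebraMap_def, Matrix.scalar_apply]
  rw [Matrix.trace_eq_sum_roots_charpoly, this, Polynomial.roots_multiset_prod_X_sub_C]

theorem frequently_re_sum_ge (S : Multiset ℂ) (r : ℝ) (z₀ : ℂ) (hz : z₀ ∈ S) (hr : ‖z₀‖ = r) :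
    ∃ᶠ p : ℕ in atTop, r ^ p / 2 ≤ ((S.map (fun z => z ^ p)).sum).re := by
  let u : ℂ → Circle := fun z => Circle.exp z.arg
  have hu : ∀ z : ℂ, z = ‖z‖ * (u z : ℂ) := by
    intro z
    simp [u, Circle.coe_exp, Complex.norm_mul_exp_arg_mul_I]
  have hc := mapClusterPt_one_atTop_pow u
  have hopen : {v : ℂ → Circle | ∀ z ∈ S.toFinset, (1/2 : ℝ) < (v z : ℂ).re} ∈ nhds (1 : ℂ → Circle) := by
    have : {v : ℂ → Circle | ∀ z ∈ S.toFinset, (1/2 : ℝ) < (v z : ℂ).re}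
      = ⋂ z ∈ S.toFinset, {v : ℂ → Circle | (1/2 : ℝ) < (v z : ℂ).re} := by
      ext v; simp
    rw [this, Filter.biInter_finset_mem]
    intro z _
    apply IsOpen.mem_nhds
    · apply isOpen_lt continuous_const
      exact Complex.continuous_re.comp (continuous_subtype_val.comp (continuous_apply z))
    · simp; norm_num
  have hf := (mapClusterPt_iff_frequently.1 hc) _ hopen
  refine hf.mono ?_
  intro p hp
  have key : ∀ z ∈ S, ‖z‖ ^ p / 2 ≤ (z ^ p).re := by
    intro z hzS
    have h1 := hp z (by simpa using hzS)
    have h2 : z ^ p = ((‖z‖ ^ p : ℝ) : ℂ) * ((u ^ p) z : ℂ) := by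
      conv_lhs => rw [hu z]
      rw [mul_pow]; simp
    rw [h2, Complex.re_ofReal_mul]
    have := pow_nonneg (norm_nonneg z) p
    nlinarith
  have hre : ((S.map (fun z => z ^ p)).sum).re = (S.map (fun z => (z ^ p).re)).sum := by
    have := map_multiset_sum Complex.reAddGroupHom (S.map (fun z => z ^ p))
    rw [Multiset.map_map] at this
    exact this
  rw [hre]
  obtain ⟨S', rfl⟩ := Multiset.exists_cons_of_mem hz
  rw [Multiset.map_cons, Multiset.sum_cons]
  have h0 := key z₀ (by simp)
  have h3 : 0 ≤ (S'.map (fun z => (z ^ p).re)).sum := by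
    apply Multiset.sum_nonneg
    intro x hx
    obtain ⟨z, hz', rfl⟩ := Multiset.mem_map.1 hx
    exact le_trans (by positivity) (key z (by simp [hz']))
  rw [hr] at h0
  linarith

theorem re_sum_le (S : Multiset ℂ) (r : ℝ) (h : ∀ z ∈ S, ‖z‖ ≤ r) (p : ℕ) :
    ((S.map (fun z => z ^ p)).sum).re ≤ S.card * r ^ p := by
  induction S using Multiset.induction with
  | empty => simp
  | cons a s ih =>
    have h1 := ih (fun z hz => h z (by simp [hz]))
    have h2 : (a ^ p).re ≤ r ^ p := (Complex.re_le_norm _).trans (by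
      rw [norm_pow]; exact pow_le_pow_left₀ (norm_nonneg _) (h a (by simp)) p)
    simp only [Multiset.map_cons, Multiset.sum_cons, Multiset.card_cons, Complex.add_re]
    push_cast
    linarith

theorem sum_pow_tendsto_one (S : Multiset ℂ) (h1 : S.count 1 = 1)
    (h2 : ∀ z ∈ S, z ≠ 1 → ‖z‖ < 1) :
    Tendsto (fun p : ℕ => (S.map (fun z => z ^ p)).sum) atTop (nhds 1) := by
  have hm : (1 : ℂ) ∈ S := by rw [← Multiset.count_pos]; omega
  obtain ⟨S', rfl⟩ := Multiset.exists_cons_of_mem hm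
  have h3 : (1 : ℂ) ∉ S' := by
    rw [Multiset.count_cons_self] at h1
    exact Multiset.count_eq_zero.1 (by omega)
  have h4 : ∀ z ∈ S', ‖z‖ < 1 := fun z hz => h2 z (by simp [hz]) (fun e => h3 (e ▸ hz))
  have : Tendsto (fun p : ℕ => (S'.map (fun z => z ^ p)).sum) atTop (nhds 0) := by
    clear h1 h2 hm h3
    induction S' using Multiset.induction with
    | empty => simp
    | cons a s ih =>
      have := (tendsto_pow_atTop_nhds_zero_of_norm_lt_one (h4 a (by simp))).add
        (ih (fun z hz => h4 z (by simp [hz])))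
      simpa using this
  simpa using this.const_add 1

theorem liminf_entropy (x y : ℕ → ℝ) (r N : ℝ) (hr0 : 0 ≤ r) (l : ℕ) (hl : 2 ≤ l)
    (hx : ∀ᶠ p in atTop, 0 < x p) (hy : Tendsto y atTop (nhds 1))
    (hub : ∀ p, x p ≤ N * r ^ p) (hlb : ∃ᶠ p in atTop, r ^ p / 2 ≤ x p) :
    liminf (fun p : ℕ => (1 / (p : ℝ)) * ((1 / (1 - (l : ℝ))) *
          (Real.log (x p) - (l : ℝ) * Real.log (y p)))) atTop
      = -(1 / ((l : ℝ) - 1)) * Real.log r := by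
  obtain ⟨p₀, hp₀, hp1⟩ := (hx.and (eventually_ge_atTop 1)).exists
  have hr : 0 < r := by
    rcases hr0.lt_or_eq with h | h
    · exact h
    · have := hub p₀
      rw [← h, zero_pow (by omega)] at this
      linarith
  have hN : 0 < N := by
    have := hub p₀
    by_contra hN
    have : N * r ^ p₀ ≤ 0 := mul_nonpos_of_nonpos_of_nonneg (not_lt.1 hN) (by positivity)
    linarith
  have hl' : (0 : ℝ) < (l : ℝ) - 1 := by
    have : (2 : ℝ) ≤ l := by exact_mod_cast hl
    linarith
  set c : ℝ := 1 / ((l : ℝ) - 1) with hc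
  have hcpos : 0 < c := by positivity
  have hc' : 1 / (1 - (l : ℝ)) = -c := by
    rw [hc, ← neg_sub, div_neg]
  have hlogy : Tendsto (fun p => Real.log (y p)) atTop (nhds 0) := by
    have := (Real.continuousAt_log one_ne_zero).tendsto.comp hy
    simpa [Function.comp_def] using this
  have hinv : Tendsto (fun p : ℕ => 1 / (p : ℝ)) atTop (nhds 0) := tendsto_one_div_atTop_nhds_zero_nat
  -- lower comparison sequence
  have hA : Tendsto (fun p : ℕ => (1 / (p : ℝ)) * (-c * (Real.log N - l * Real.log (y p)))
      + -c * Real.log r) atTop (nhds (-c * Real.log r)) := by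
    have := (hinv.mul (((hlogy.const_mul (l : ℝ)).const_sub (Real.log N)).const_mul (-c))).add_const
      (-c * Real.log r)
    simpa [Function.comp_def] using this
  have hB : Tendsto (fun p : ℕ => (1 / (p : ℝ)) * (-c * (-Real.log 2 - l * Real.log (y p)))
      + -c * Real.log r) atTop (nhds (-c * Real.log r)) := by
    have := (hinv.mul (((hlogy.const_mul (l : ℝ)).const_sub (-Real.log 2)).const_mul (-c))).add_const
      (-c * Real.log r)
    simpa [Function.comp_def] using this
  rw [hc']
  set f : ℕ → ℝ := fun p => (1 / (p : ℝ)) * (-c * (Real.log (x p) - (l : ℝ) * Real.log (y p))) with hf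
  have hlow : ∀ᶠ p : ℕ in atTop, (1 / (p : ℝ)) * (-c * (Real.log N - l * Real.log (y p)))
      + -c * Real.log r ≤ f p := by
    filter_upwards [hx, eventually_ge_atTop 1] with p hxp hp
    have hp' : (0 : ℝ) < p := by exact_mod_cast hp
    have h1 : Real.log (x p) ≤ Real.log N + p * Real.log r := by
      rw [← Real.log_pow, ← Real.log_mul hN.ne' (by positivity)]
      exact Real.log_le_log hxp (hub p)
    have e : -c * Real.log r = (1 / (p : ℝ)) * (-c * (p * Real.log r)) := by
      field_simp
    rw [e, ← mul_add]
    apply mul_le_mul_of_nonneg_left _ (by positivity)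
    nlinarith
  have hup : ∃ᶠ p : ℕ in atTop, f p ≤ (1 / (p : ℝ)) * (-c * (-Real.log 2 - l * Real.log (y p)))
      + -c * Real.log r := by
    refine (hlb.and_eventually (eventually_ge_atTop 1)).mono ?_
    rintro p ⟨hxp, hp⟩
    have hp' : (0 : ℝ) < p := by exact_mod_cast hp
    have h1 : p * Real.log r - Real.log 2 ≤ Real.log (x p) := by
      rw [← Real.log_pow, ← Real.log_div (by positivity) (by norm_num)]
      exact Real.log_le_log (by positivity) hxp
    have e : -c * Real.log r = (1 / (p : ℝ)) * (-c * (p * Real.log r)) := by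
      field_simp
    rw [e, ← mul_add]
    apply mul_le_mul_of_nonneg_left _ (by positivity)
    nlinarith
  have hev : ∀ ε > 0, ∀ᶠ p in atTop, -c * Real.log r - ε ≤ f p := by
    intro ε hε
    filter_upwards [hlow, hA.eventually_const_le (show -c * Real.log r - ε < -c * Real.log r by linarith)]
      with p h1 h2
    linarith
  have hfr : ∀ ε > 0, ∃ᶠ p in atTop, f p ≤ -c * Real.log r + ε := by
    intro ε hε
    refine (hup.and_eventually (hB.eventually_le_const
      (show -c * Real.log r < -c * Real.log r + ε by linarith))).mono ?_
    rintro p ⟨h1, h2⟩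
    linarith
  apply le_antisymm
  · apply le_of_forall_pos_le_add
    intro ε hε
    exact liminf_le_of_frequently_le (hfr ε hε) ⟨_, hev 1 one_pos⟩
  · apply le_of_forall_pos_sub_le
    intro ε hε
    refine le_liminf_of_le ?_ (hev ε hε)
    exact IsCoboundedUnder.of_frequently_le (hfr 1 one_pos)

/-- Product operator on `l` replicas with ket factors `B` and bra factors `C`. -/
def repKron {l D : ℕ} (B C : Fin l → Matrix (Fin D) (Fin D) ℂ) :
    Matrix (Fin l → Fin D × Fin D) (Fin l → Fin D × Fin D) ℂ :=
  fun f g => ∏ j, (B j (f j).1 (g j).1 * C j (f j).2 (g j).2)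

theorem sum_pi_prod {l : ℕ} {X : Type*} [Fintype X] (F : Fin l → X → ℂ) :
    ∑ h : Fin l → X, ∏ j, F j (h j) = ∏ j, ∑ x, F j x := by
  classical
  rw [Finset.prod_univ_sum, Fintype.piFinset_univ]

theorem repKron_mul {l D : ℕ} (B C B' C' : Fin l → Matrix (Fin D) (Fin D) ℂ) :
    repKron B C * repKron B' C' = repKron (fun j => B j * B' j) (fun j => C j * C' j) := by
  ext f g
  simp only [repKron, Matrix.mul_apply]
  simp only [← Finset.prod_mul_distrib]
  rw [sum_pi_prod (fun j (x : Fin D × Fin D) => B j (f j).1 x.1 * C j (f j).2 x.2 *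
    (B' j x.1 (g j).1 * C' j x.2 (g j).2))]
  refine Finset.prod_congr rfl fun j _ => ?_
  rw [Fintype.sum_prod_type, Finset.sum_mul_sum]
  refine Finset.sum_congr rfl fun a _ => Finset.sum_congr rfl fun b _ => ?_
  ring

theorem repKron_one {l D : ℕ} :
    repKron (fun _ : Fin l => (1 : Matrix (Fin D) (Fin D) ℂ)) (fun _ => 1) = 1 := by
  ext f g
  simp only [repKron, Matrix.one_apply]
  by_cases h : f = g
  · subst h; simp
  · rw [if_neg h]
    obtain ⟨j, hj⟩ := Function.ne_iff.1 h
    apply Finset.prod_eq_zero (Finset.mem_univ j)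
    by_cases h1 : (f j).1 = (g j).1
    · have h2 : (f j).2 ≠ (g j).2 := fun h2 => hj (Prod.ext h1 h2)
      simp [h2]
    · simp [h1]

theorem repKron_list {l D n : ℕ} (B C : Fin n → Fin l → Matrix (Fin D) (Fin D) ℂ) :
    (List.ofFn fun m => repKron (B m) (C m)).prod =
      repKron (fun j => (List.ofFn fun m => B m j).prod)
        (fun j => (List.ofFn fun m => C m j).prod) := by
  induction n with
  | zero => simp [repKron_one]
  | succ n ih =>
    simp only [List.ofFn_succ, List.prod_cons]
    rw [ih (fun m => B m.succ) (fun m => C m.succ), repKron_mul]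

theorem trace_repKron {l D : ℕ} (B C : Fin l → Matrix (Fin D) (Fin D) ℂ) :
    (repKron B C).trace = ∏ j, ((B j).trace * (C j).trace) := by
  simp only [Matrix.trace, Matrix.diag, repKron]
  rw [sum_pi_prod (fun j (x : Fin D × Fin D) => B j x.1 x.1 * C j x.2 x.2)]
  refine Finset.prod_congr rfl fun j _ => ?_
  rw [Fintype.sum_prod_type, Finset.sum_mul_sum]

theorem sum_list_prod {R X : Type*} [Semiring R] [Fintype X] {n : ℕ} (E : Fin n → X → R) :
    ∑ w : Fin n → X, (List.ofFn fun m => E m (w m)).prod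
      = (List.ofFn fun m => ∑ x, E m x).prod := by
  induction n with
  | zero => simp
  | succ n ih =>
    rw [← (Fin.consEquiv (fun _ : Fin (n + 1) => X)).sum_comp, Fintype.sum_prod_type]
    simp only [List.ofFn_succ, List.prod_cons, Fin.consEquiv_apply, Fin.cons_zero, Fin.cons_succ]
    rw [← ih (fun m => E m.succ), Finset.sum_mul_sum]

theorem sum_path {R ι : Type*} [CommSemiring R] [Fintype ι] [DecidableEq ι] (M : Matrix ι ι R)
    (n : ℕ) (G : ι → ι → R) :
    ∑ I : Fin (n + 1) → ι, (∏ j : Fin n, M (I j.castSucc) (I j.succ)) * G (I (Fin.last n)) (I 0)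
      = ∑ a, ∑ b, (M ^ n) a b * G b a := by
  induction n generalizing G with
  | zero =>
    rw [← (Equiv.funUnique (Fin 1) ι).symm.sum_comp]
    simp [Matrix.one_apply]
  | succ n ih =>
    rw [← (Fin.consEquiv (fun _ : Fin (n + 2) => ι)).sum_comp, Fintype.sum_prod_type]
    refine Finset.sum_congr rfl fun a _ => ?_
    have := ih (fun b c => M a c * G b a)
    simp only [Fin.consEquiv_apply, Fin.prod_univ_succ, Fin.castSucc_zero, Fin.cons_zero,
      Fin.cons_succ, ← Fin.succ_castSucc, ← Fin.succ_last]
    rw [show (∑ x : Fin (n + 1) → ι, M a (x 0) *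
        (∏ i : Fin n, M (x i.castSucc) (x i.succ)) * G (x (Fin.last n)) a) =
        ∑ I : Fin (n + 1) → ι, (∏ j : Fin n, M (I j.castSucc) (I j.succ)) *
          (M a (I 0) * G (I (Fin.last n)) a) from
      Finset.sum_congr rfl fun I _ => by ring]
    rw [this, Finset.sum_comm]
    refine Finset.sum_congr rfl fun b _ => ?_
    rw [pow_succ', Matrix.mul_apply, Finset.sum_mul]
    exact Finset.sum_congr rfl fun c _ => by ring

theorem trace_pow_cyc {R ι : Type*} [CommSemiring R] [Fintype ι] [DecidableEq ι]
    (M : Matrix ι ι R) (l : ℕ) (hl : 1 ≤ l) :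
    (M ^ l).trace = ∑ I : Fin l → ι, ∏ j, M (I j) (I (cycSucc j)) := by
  obtain ⟨n, rfl⟩ : ∃ n, l = n + 1 := ⟨l - 1, by omega⟩
  have h := sum_path M n (fun b a => M b a)
  rw [pow_succ]
  simp only [Matrix.trace, Matrix.diag, Matrix.mul_apply]
  rw [← h]
  refine Finset.sum_congr rfl fun I _ => ?_
  rw [Fin.prod_univ_castSucc]
  congr 1
  · refine Finset.prod_congr rfl fun j _ => ?_
    congr 2
    ext
    simp [cycSucc, Nat.mod_eq_of_lt]
  · congr 2
    ext
    simp [cycSucc]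

theorem cycSucc_bij {l : ℕ} : Function.Bijective (cycSucc : Fin l → Fin l) := by
  rw [Fintype.bijective_iff_injective_and_card]
  refine ⟨?_, rfl⟩
  intro a b h
  have h1 : ((a : ℕ) + 1) % l = ((b : ℕ) + 1) % l := congrArg Fin.val h
  have ha := a.2
  have hb := b.2
  ext
  rcases Nat.lt_or_ge ((a : ℕ) + 1) l with h2 | h2 <;>
    rcases Nat.lt_or_ge ((b : ℕ) + 1) l with h3 | h3
  · rw [Nat.mod_eq_of_lt h2, Nat.mod_eq_of_lt h3] at h1; omega
  · have : (b : ℕ) + 1 = l := by omega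
    rw [Nat.mod_eq_of_lt h2, this, Nat.mod_self] at h1; omega
  · have : (a : ℕ) + 1 = l := by omega
    rw [Nat.mod_eq_of_lt h3, this, Nat.mod_self] at h1; omega
  · omega

/-- The index relabelling implemented by `ulMatrix`. -/
def twistIdx {l D : ℕ} (g : Fin l → Fin D × Fin D) : Fin l → Fin D × Fin D :=
  fun i => ((g i).1, (g (cycSucc i)).2)

theorem twistIdx_bij {l D : ℕ} : Function.Bijective (twistIdx : (Fin l → Fin D × Fin D) → _) := by
  rw [Fintype.bijective_iff_injective_and_card]
  refine ⟨?_, rfl⟩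
  intro f g h
  funext i
  apply Prod.ext
  · have h1 : (twistIdx f i).1 = (twistIdx g i).1 := by rw [h]
    exact h1
  · obtain ⟨j, rfl⟩ := cycSucc_bij.2 i
    have h1 : (twistIdx f j).2 = (twistIdx g j).2 := by rw [h]
    exact h1

theorem ulMatrix_apply {l D : ℕ} (f g : Fin l → Fin D × Fin D) :
    ulMatrix l D f g = if f = twistIdx g then 1 else 0 := by
  unfold ulMatrix
  congr 1
  rw [eq_iff_iff, funext_iff]
  refine forall_congr' fun i => ?_
  rw [Prod.ext_iff]; rfl

theorem ulMatrix_inv {l D : ℕ} :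
    (ulMatrix l D)⁻¹ = Matrix.of fun f g => if twistIdx f = g then 1 else 0 := by
  apply Matrix.inv_eq_left_inv
  ext f g
  rw [Matrix.mul_apply]
  simp only [ulMatrix_apply]
  simp [Matrix.one_apply, twistIdx_bij.1.eq_iff]

theorem twist_conj {l D : ℕ} (M : Matrix (Fin l → Fin D × Fin D) (Fin l → Fin D × Fin D) ℂ) :
    (ulMatrix l D)⁻¹ * M * ulMatrix l D = Matrix.of fun f g => M (twistIdx f) (twistIdx g) := by
  rw [ulMatrix_inv]
  ext f g
  simp [Matrix.mul_apply, ulMatrix_apply]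

theorem mpsTransfer_apply {d D : ℕ} (A : Fin d → Matrix (Fin D) (Fin D) ℂ)
    (x y : Fin D × Fin D) :
    mpsTransfer A x y = ∑ a, A a x.1 y.1 * ((A a).map star) x.2 y.2 := by
  simp [mpsTransfer, Matrix.sum_apply, Matrix.kroneckerMap_apply]

theorem sum_rep_plain {d D l : ℕ} (A : Fin d → Matrix (Fin D) (Fin D) ℂ) :
    ∑ w : Fin l → Fin d, repKron (fun j => A (w j)) (fun j => (A (w j)).map star)
      = kronPow l (mpsTransfer A) := by
  ext f g
  rw [Matrix.sum_apply]
  simp only [repKron, kronPow, mpsTransfer_apply]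
  exact sum_pi_prod (fun j a => A a (f j).1 (g j).1 * ((A a).map star) (f j).2 (g j).2)

theorem sum_rep_twist {d D l : ℕ} (A : Fin d → Matrix (Fin D) (Fin D) ℂ) :
    ∑ w : Fin l → Fin d, repKron (fun j => A (w (cycSucc j))) (fun j => (A (w j)).map star)
      = (ulMatrix l D)⁻¹ * kronPow l (mpsTransfer A) * ulMatrix l D := by
  rw [twist_conj]
  ext f g
  rw [Matrix.sum_apply]
  simp only [Matrix.of_apply, kronPow, mpsTransfer_apply]
  rw [← sum_pi_prod (fun j a => A a (twistIdx f j).1 (twistIdx g j).1 *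
    ((A a).map star) (twistIdx f j).2 (twistIdx g j).2)]
  let e : Fin l ≃ Fin l := Equiv.ofBijective _ cycSucc_bij
  rw [← (Equiv.arrowCongr e (Equiv.refl (Fin d))).sum_comp]
  refine Finset.sum_congr rfl fun w _ => ?_
  simp only [repKron]
  rw [Finset.prod_mul_distrib, Finset.prod_mul_distrib]
  congr 1
  · refine Finset.prod_congr rfl fun j _ => ?_
    have : (Equiv.arrowCongr e (Equiv.refl (Fin d))) w (cycSucc j) = w j := by
      change w (e.symm (e j)) = w j
      simp
    rw [this]; rfl
  · rw [← e.prod_comp]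
    refine Finset.prod_congr rfl fun j _ => ?_
    have : (Equiv.arrowCongr e (Equiv.refl (Fin d))) w (e j) = w j := by
      change w (e.symm (e j)) = w j
      simp
    rw [this]; rfl

/-- Splitting a global configuration into kept and traced-out sites. -/
def cfgEquiv (d k p : ℕ) (hk : 1 ≤ k) :
    ((Fin p → Fin d) × ({m : Fin (k * p) // (m : ℕ) % k ≠ k - 1} → Fin d)) ≃
      (Fin (k * p) → Fin d) where
  toFun x := combCfg d k p x.1 x.2
  invFun w := (fun q => w ⟨k * q + (k - 1), by
      have := q.2
      calc k * q + (k - 1) < k * (q + 1) := by rw [Nat.mul_add]; omega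
        _ ≤ k * p := Nat.mul_le_mul_left _ this⟩, fun c => w c.1)
  left_inv := by
    rintro ⟨I, c⟩
    apply Prod.ext
    · funext q
      have h1 : (k * (q : ℕ) + (k - 1)) % k = k - 1 := by
        rw [Nat.mul_add_mod]; exact Nat.mod_eq_of_lt (by omega)
      have h2 : (k * (q : ℕ) + (k - 1)) / k = q := by
        rw [Nat.mul_add_div (by omega), Nat.div_eq_of_lt (by omega)]; simp
      simp [combCfg, h1, h2]
    · funext m
      simp [combCfg, m.2]
  right_inv := by
    intro w
    funext m
    simp only [combCfg]
    split_ifs with h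
    · congr 1
      ext
      simp only
      have := Nat.div_add_mod (m : ℕ) k
      omega
    · rfl

theorem star_mpsPsi {d D n : ℕ} (A : Fin d → Matrix (Fin D) (Fin D) ℂ) (i : Fin n → Fin d) :
    star (mpsPsi n A i) = ((List.ofFn fun j : Fin n => (A (i j)).map star).prod).trace := by
  unfold mpsPsi
  have h : ∀ M : Matrix (Fin D) (Fin D) ℂ, M.map star = (starRingEnd ℂ).mapMatrix M := fun M => rfl
  simp only [h]
  have : (List.ofFn fun j : Fin n => (starRingEnd ℂ).mapMatrix (A (i j)))
    = (List.ofFn fun j : Fin n => A (i j)).map (starRingEnd ℂ).mapMatrix := by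
    rw [List.map_ofFn]; rfl
  rw [this, ← map_list_prod]
  simp [Matrix.trace]

theorem list_block {R : Type*} [Monoid R] (k p : ℕ) (hk : 1 ≤ k) (a b : R) :
    (List.ofFn fun m : Fin (k * p) => if (m : ℕ) % k = k - 1 then b else a).prod
      = (a ^ (k - 1) * b) ^ p := by
  rw [List.ofFn_mul', List.prod_flatten, List.map_ofFn]
  have : (List.prod ∘ fun i : Fin p => List.ofFn fun j : Fin k =>
      if (k * (i : ℕ) + (j : ℕ)) % k = k - 1 then b else a) = fun _ => a ^ (k - 1) * b := by
    funext i
    obtain ⟨n, rfl⟩ : ∃ n, k = n + 1 := ⟨k - 1, by omega⟩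
    simp only [Function.comp_apply, Nat.mul_add_mod]
    rw [List.ofFn_succ']
    have h2 : (List.ofFn fun j : Fin n => if ((j.castSucc : Fin (n+1)) : ℕ) % (n + 1) = n + 1 - 1 then b else a)
      = List.replicate n a := by
      rw [← List.ofFn_const]
      congr 1
      funext j
      have := j.2
      rw [if_neg]
      simp only [Fin.val_castSucc]
      rw [Nat.mod_eq_of_lt (by omega)]
      omega
    rw [h2]
    simp
  simp only at this ⊢
  rw [this, List.ofFn_const, List.prod_replicate]

theorem trace_combReduced_pow {d D : ℕ} (A : Fin d → Matrix (Fin D) (Fin D) ℂ) (l k p : ℕ)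
    (hl : 1 ≤ l) (hk : 1 ≤ k) :
    ((combReducedState d D k p A) ^ l).trace = ((twistedTransferL l k A) ^ p).trace := by
  let s : Fin (k * p) → Fin l → Fin l := fun m j => if (m : ℕ) % k = k - 1 then cycSucc j else j
  -- the right-hand side as a sum over replica configurations
  have hR : ((twistedTransferL l k A) ^ p).trace = ∑ w : Fin (k * p) → Fin l → Fin d,
      ∏ j, (mpsPsi (k * p) A (fun m => w m (s m j)) * star (mpsPsi (k * p) A (fun m => w m j))) := by
    have h1 : twistedTransferL l k A = kronPow l (mpsTransfer A) ^ (k - 1) *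
        ((ulMatrix l D)⁻¹ * kronPow l (mpsTransfer A) * ulMatrix l D) := by
      simp only [twistedTransferL, Matrix.mul_assoc]
    rw [h1, ← list_block k p hk]
    have h2 : (fun m : Fin (k * p) => if (m : ℕ) % k = k - 1 then
        (ulMatrix l D)⁻¹ * kronPow l (mpsTransfer A) * ulMatrix l D else kronPow l (mpsTransfer A))
        = fun m => ∑ w : Fin l → Fin d,
          repKron (fun j => A (w (s m j))) (fun j => (A (w j)).map star) := by
      funext m
      by_cases h : (m : ℕ) % k = k - 1
      · simp only [s, h, if_true, sum_rep_twist]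
      · simp only [s, h, if_false, sum_rep_plain]
    rw [h2, ← sum_list_prod (fun (m : Fin (k * p)) (w : Fin l → Fin d) =>
      repKron (fun j => A (w (s m j))) (fun j => (A (w j)).map star)), Matrix.trace_sum]
    refine Finset.sum_congr rfl fun w _ => ?_
    rw [repKron_list (fun m j => A (w m (s m j))) (fun m j => (A (w m j)).map star), trace_repKron]
    refine Finset.prod_congr rfl fun j _ => ?_
    rw [star_mpsPsi]
    rfl
  rw [hR, trace_pow_cyc _ l hl]
  simp only [combReducedState]
  -- expand the product of sums
  have h3 : ∀ I : Fin l → Fin p → Fin d, (∏ j, ∑ c : {m : Fin (k * p) // (m : ℕ) % k ≠ k - 1} → Fin d,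
      mpsPsi (k * p) A (combCfg d k p (I (cycSucc j)) c) *
        star (mpsPsi (k * p) A (combCfg d k p (I j) c))) =
      ∑ c : Fin l → {m : Fin (k * p) // (m : ℕ) % k ≠ k - 1} → Fin d, ∏ j,
      (mpsPsi (k * p) A (combCfg d k p (I (cycSucc j)) (c j)) *
        star (mpsPsi (k * p) A (combCfg d k p (I j) (c j)))) := fun I =>
    (sum_pi_prod (fun j c => mpsPsi (k * p) A (combCfg d k p (I (cycSucc j)) c) *
        star (mpsPsi (k * p) A (combCfg d k p (I j) c)))).symm
  simp only [h3]
  rw [← Fintype.sum_prod_type']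
  let e : ((Fin l → Fin p → Fin d) × (Fin l → {m : Fin (k * p) // (m : ℕ) % k ≠ k - 1} → Fin d)) ≃
      (Fin (k * p) → Fin l → Fin d) :=
    ((Equiv.arrowProdEquivProdArrow _ _ _).symm.trans
      (Equiv.arrowCongr (Equiv.refl (Fin l)) (cfgEquiv d k p hk))).trans (Equiv.piComm _)
  rw [← e.sum_comp]
  refine Finset.sum_congr rfl fun x _ => ?_
  refine Finset.prod_congr rfl fun j _ => ?_
  have he : ∀ m j, e x m j = combCfg d k p (x.1 j) (x.2 j) m := fun m j => rfl
  simp only [he]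
  congr 2
  funext m
  simp only [s]
  by_cases h : (m : ℕ) % k = k - 1
  · simp [combCfg, h]
  · simp [combCfg, h]

theorem trace_combReduced {d D : ℕ} (A : Fin d → Matrix (Fin D) (Fin D) ℂ) (k p : ℕ)
    (hk : 1 ≤ k) :
    (combReducedState d D k p A).trace = ((mpsTransfer A) ^ (k * p)).trace := by
  have h := trace_combReduced_pow A 1 k p le_rfl hk
  rw [pow_one] at h
  rw [h]
  have hid : ∀ f : Fin 1 → Fin D × Fin D, twistIdx f = f := by
    intro f; funext i
    have : cycSucc i = i := Subsingleton.elim _ _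
    simp [twistIdx, this]
  have h1 : twistedTransferL 1 k A = kronPow 1 (mpsTransfer A) ^ k := by
    have : twistedTransferL 1 k A = kronPow 1 (mpsTransfer A) ^ (k - 1) *
        ((ulMatrix 1 D)⁻¹ * kronPow 1 (mpsTransfer A) * ulMatrix 1 D) := by
      simp only [twistedTransferL, Matrix.mul_assoc]
    rw [this, twist_conj]
    simp only [hid]
    conv_rhs => rw [← Nat.sub_add_cancel hk, pow_succ]
    rfl
  rw [h1, ← pow_mul]
  let e : (Fin 1 → Fin D × Fin D) ≃ (Fin D × Fin D) := Equiv.funUnique _ _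
  have h2 : kronPow 1 (mpsTransfer A) = (Matrix.reindexAlgEquiv ℂ ℂ e.symm) (mpsTransfer A) := by
    ext f g
    simp [kronPow, e]
  rw [h2, ← map_pow]
  simp [Matrix.trace, Matrix.coe_reindexAlgEquiv]
  exact e.sum_comp (fun x => (mpsTransfer A ^ (k * p)) x x)

open scoped ComplexOrder in
theorem combReduced_posSemidef {d D : ℕ} (A : Fin d → Matrix (Fin D) (Fin D) ℂ) (k p : ℕ) :
    (combReducedState d D k p A).PosSemidef := by
  let B : Matrix ({m : Fin (k * p) // (m : ℕ) % k ≠ k - 1} → Fin d) (Fin p → Fin d) ℂ :=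
    fun c I => mpsPsi (k * p) A (combCfg d k p I c)
  have : combReducedState d D k p A = Bᴴ * B := by
    ext J I
    simp only [combReducedState, Matrix.mul_apply, Matrix.conjTranspose_apply, B]
    exact Finset.sum_congr rfl fun c _ => mul_comm _ _
  rw [this]
  exact Matrix.posSemidef_conjTranspose_mul_self B

open scoped ComplexOrder in
theorem trace_pow_re_pos {d D : ℕ} (A : Fin d → Matrix (Fin D) (Fin D) ℂ) (k p l : ℕ)
    (hp : (combReducedState d D k p A).trace ≠ 0) :
    0 < ((combReducedState d D k p A ^ l).trace).re := by
  have hps := (combReduced_posSemidef A k p).pow l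
  have h0 := hps.trace_nonneg
  have hne : (combReducedState d D k p A ^ l).trace ≠ 0 := by
    intro h
    have hz := hps.trace_eq_zero_iff.1 h
    exact hp (Matrix.isNilpotent_trace_of_isNilpotent ⟨l, hz⟩).eq_zero
  exact (Complex.pos_iff.1 (lt_of_le_of_ne h0 hne.symm)).1

/-- Rényi-`l` entropy density from the twisted transfer operator: if the transfer matrix of the
MPS tensor `A` is gapped and normalized, then for `l, k ≥ 2` the liminf of the Rényi-`l`
entropy density of the state of every `k`-th site equals `-(1/(l-1)) · log r`, where `r` is the
spectral radius of the order-`l` twisted transfer operator. -/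
theorem renyi_entropy_density_eq_log_spectral_radius
    (d D : ℕ) (hd : 1 ≤ d) (hD : 1 ≤ D)
    (A : Fin d → Matrix (Fin D) (Fin D) ℂ)
    (h1 : Polynomial.rootMultiplicity 1 (mpsTransfer A).charpoly = 1)
    (h2 : ∀ z ∈ (mpsTransfer A).charpoly.roots, z ≠ 1 → ‖z‖ < 1)
    (l k : ℕ) (hl : 2 ≤ l) (hk : 2 ≤ k)
    (r : ℝ)
    (hr : IsGreatest {x : ℝ | ∃ z ∈ (twistedTransferL l k A).charpoly.roots, ‖z‖ = x} r) :
    liminf (fun p : ℕ =>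
        (1 / (p : ℝ)) * ((1 / (1 - (l : ℝ))) *
          (Real.log ((((combReducedState d D k p A) ^ l).trace).re)
            - (l : ℝ) * Real.log (((combReducedState d D k p A).trace).re)))) atTop
      = -(1 / ((l : ℝ) - 1)) * Real.log r := by
  obtain ⟨⟨z₀, hz₀, hz₀r⟩, hmax⟩ := hr
  have hx : ∀ p, ((combReducedState d D k p A) ^ l).trace =
      ((twistedTransferL l k A).charpoly.roots.map (fun z => z ^ p)).sum := fun p => by
    rw [trace_combReduced_pow A l k p (by omega) (by omega), trace_pow_eq_sum]
  have hy : Tendsto (fun p => (combReducedState d D k p A).trace) atTop (nhds 1) := by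
    have hT := sum_pow_tendsto_one (mpsTransfer A).charpoly.roots
      (by rw [Polynomial.count_roots]; exact h1) h2
    have hkp : Tendsto (fun p : ℕ => k * p) atTop atTop :=
      tendsto_id.const_mul_atTop' (by omega)
    refine (hT.comp hkp).congr fun p => ?_
    rw [trace_combReduced A k p (by omega), trace_pow_eq_sum]
    rfl
  have hpos : ∀ᶠ p in atTop, 0 < ((combReducedState d D k p A ^ l).trace).re := by
    filter_upwards [hy.eventually_ne one_ne_zero] with p hp
    exact trace_pow_re_pos A k p l hp
  refine liminf_entropy (fun p => ((combReducedState d D k p A ^ l).trace).re)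
    (fun p => ((combReducedState d D k p A).trace).re) r
    ((twistedTransferL l k A).charpoly.roots.card) (hz₀r ▸ norm_nonneg _) l hl hpos ?_ ?_ ?_
  · simpa [Function.comp_def] using (Complex.continuous_re.tendsto 1).comp hy
  · intro p
    simp only [hx]
    exact re_sum_le _ r (fun z hz => hmax ⟨z, hz, rfl⟩) p
  · simp only [hx]
    exact frequently_re_sum_ge _ r z₀ hz₀ hz₀r
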